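/- Let f be the local rule of width 4 with code number 49024, and define g : ℤ^4 → ℤ by g(x_0,x_1,x_2,x_3) = x_1 − 1 + Θ(x_3 + x_2 − 2x_1 − 3). Then for every strictly increasing s : ℤ → ℤ, the function t = g_{∞,1}(s) is strictly increasing and φ(t) = f_∞(φ(s)). -/

import Mathlib

/-- For a (strictly increasing) `s : ℤ → ℤ`, `phi s` is the occupancy bisequence:
`phi s i = 1` iff `i` lies in the range of `s`. -/
noncomputable def phi (s : ℤ → ℤ) (i : ℤ) : Fin 2 :=
  haveI := Classical.propDecidable (i ∈ Set.range s)
  if i ∈ Set.range s then 1 else 0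

/-- The local rule of width 4 with code number `C`: `f(x₁,x₂,x₃,x₄)` is the
binary digit of `C` at position `8x₁ + 4x₂ + 2x₃ + x₄`. -/
def ruleOfCode (C : ℕ) (x : Fin 4 → Fin 2) : Fin 2 :=
  if C.testBit (8 * (x 0 : ℕ) + 4 * (x 1 : ℕ) + 2 * (x 2 : ℕ) + (x 3 : ℕ)) then 1 else 0

/-- The step function: `Θ(m) = 1` if `m > 0` and `Θ(m) = 0` otherwise. -/
def theta (m : ℤ) : ℤ := if 0 < m then 1 else 0

/-- The delta function: `δ_{m,n} = 1` if `m = n` and `δ_{m,n} = 0` otherwise. -/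
def deltaZ (m k : ℤ) : ℤ := if m = k then 1 else 0

lemma next_of_mem (s : ℤ → ℤ) (hs : StrictMono s) (n : ℤ) (h : s n + 1 ∈ Set.range s) :
    s (n + 1) = s n + 1 := by
  obtain ⟨m, hm⟩ := h
  have h1 : n < m := hs.lt_iff_lt.mp (by omega)
  have h2 : s (n + 1) ≤ s m := hs.monotone (by omega)
  have h3 : s n < s (n + 1) := hs (by omega)
  omega

lemma mem_range_iff (s : ℤ → ℤ) (hs : StrictMono s) (i : ℤ) :
    i ∈ Set.range (fun i : ℤ => s i - 1 + theta (s (i + 2) + s (i + 1) - 2 * s i - 3)) ↔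
      (i ∈ Set.range s ∧ ¬ (i + 1 ∈ Set.range s ∧ i + 2 ∈ Set.range s)) ∨
      (i + 1 ∈ Set.range s ∧ i + 2 ∈ Set.range s ∧ i + 3 ∈ Set.range s) := by
  have hlt : ∀ n, s n < s (n + 1) := fun n => hs (by omega)
  have hlt2 : ∀ n, s (n + 1) < s (n + 2) := fun n => hs (by omega)
  have triple : ∀ n, s n + 1 ∈ Set.range s → s n + 2 ∈ Set.range s →
      s (n + 1) = s n + 1 ∧ s (n + 2) = s n + 2 := by
    intro n h1 h2
    have a := next_of_mem s hs n h1
    have b := next_of_mem s hs (n + 1) (by rw [a, add_assoc]; exact h2)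
    rw [add_assoc] at b
    norm_num at b
    exact ⟨a, by omega⟩
  constructor
  · rintro ⟨n, hn⟩
    have h1 := hlt n
    have h2 := hlt2 n
    simp only [theta] at hn
    split_ifs at hn with h
    · left
      have e : i = s n := by omega
      subst e
      refine ⟨⟨n, rfl⟩, fun hh => ?_⟩
      have := triple n hh.1 hh.2
      omega
    · right
      exact ⟨⟨n, by omega⟩, ⟨n + 1, by omega⟩, ⟨n + 2, by omega⟩⟩
  · rintro (⟨⟨n, rfl⟩, h⟩ | ⟨⟨n, hn⟩, h2, h3⟩)
    · refine ⟨n, ?_⟩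
      have h1 := hlt n
      have h2 := hlt2 n
      simp only [theta]
      split_ifs with hh
      · omega
      · exact absurd ⟨⟨n + 1, by omega⟩, ⟨n + 2, by omega⟩⟩ h
    · refine ⟨n, ?_⟩
      have := triple n (by rw [hn, add_assoc]; exact h2) (by rw [hn, add_assoc]; exact h3)
      simp only [theta]
      split_ifs with hh <;> omega

/-- For the conservative 4-input rule with code number 49024 and the particle
mapping `g(x₀,x₁,x₂,x₃) = x₁ - 1 + Θ(x₃ + x₂ - 2x₁ - 3)`: for every strictly increasing `s : ℤ → ℤ`,
the bisequence `t = g_{∞,1}(s)`, `t i = g (s (i-1)) (s i) (s (i+1)) (s (i+2))`,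
is strictly increasing and `φ(t) = f_∞(φ(s))`. -/
theorem stmt_13 (s : ℤ → ℤ) (hs : StrictMono s) :
    StrictMono (fun i : ℤ => s i - 1 + theta (s (i + 2) + s (i + 1) - 2 * s i - 3)) ∧
    ∀ i : ℤ,
      phi (fun i : ℤ => s i - 1 + theta (s (i + 2) + s (i + 1) - 2 * s i - 3)) i =
        ruleOfCode 49024 (fun k : Fin 4 => phi s (i + (k : ℕ))) := by
  constructor
  · refine strictMono_int_of_lt_succ fun n => ?_
    have h1 : s n < s (n + 1) := hs (by omega)
    have h2 : s (n + 1) < s (n + 2) := hs (by omega)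
    have h3 : s (n + 2) < s (n + 1 + 2) := hs (by omega)
    have e : s (n + 1 + 1) = s (n + 2) := by rw [add_assoc]; rfl
    simp only [theta, e]
    split_ifs <;> omega
  · intro i
    have key := mem_range_iff s hs i
    generalize (fun i : ℤ => s i - 1 + theta (s (i + 2) + s (i + 1) - 2 * s i - 3)) = t at key ⊢
    unfold phi ruleOfCode
    by_cases h0 : i ∈ Set.range s <;> by_cases h1 : i + 1 ∈ Set.range s <;>
      by_cases h2 : i + 2 ∈ Set.range s <;> by_cases h3 : i + 3 ∈ Set.range s <;>
      simp only [h0, h1, h2, h3, and_true, and_false, true_and, false_and, not_true, not_false_iff,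
        or_true, or_false, true_or, false_or, iff_true, iff_false] at key <;>
      simp [h0, h1, h2, h3, key, -Set.mem_range] <;> decide
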